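/- Let a > 0, ε > 0, and let X : [0,∞) → ℝ² be continuous, twice continuously differentiable on (0,∞), with X(0) = (2a, a) and Ẋ(t) → 0 as t → 0⁺, satisfying Ẍ(t) + (3/t)·Ẋ(t) + ∇f_{ε,a}(X(t)) = 0 for all t > 0. Suppose X(t) → 0 as t → ∞ and that there exist T_rad > 0 and κ > 0 with t³·det(X(t), Ẋ(t)) = κ for all t ≥ T_rad. Then there exist constants c₀ > 0, C₀ > 0, and T₀ > 0 such that c₀/(t²·log t) ≤ f_{ε,a}(X(t)) ≤ C₀/t² for all t ≥ T₀. -/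

import Mathlib

/-- `F(0) = 0`, `F(r) = ∫₀^r du/(−log u)` for `0 < r ≤ e⁻²`,
`F(r) = F(e⁻²) + (1/2)(r − e⁻²)` for `r ≥ e⁻²`. -/
noncomputable def F (r : ℝ) : ℝ :=
  if r ≤ Real.exp (-2) then ∫ u in (0:ℝ)..r, 1 / (-Real.log u)
  else (∫ u in (0:ℝ)..Real.exp (-2), 1 / (-Real.log u)) + (1/2) * (r - Real.exp (-2))

/-- `f_{ε,a}(x₁,x₂) = F(√(x₁²+x₂²)) + (ε/2)·((x₁ − a)₊)²`. -/
noncomputable def feps (ε a : ℝ) (x : EuclideanSpace ℝ (Fin 2)) : ℝ :=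
  F (Real.sqrt ((x 0)^2 + (x 1)^2)) + (ε/2) * (max (x 0 - a) 0)^2

/-!
Along the flow the Su–Boyd–Candès energy `t² f(X) + 2‖X + (t/2) Ẋ‖²` is nonincreasing as long as
`f(X) ≤ ⟪∇f(X), X⟫`, which gives both `f(X) = O(t⁻²)` and `‖Ẋ‖ = O(t⁻¹)`. The velocity bound turns
conservation of the angular momentum into `|κ| = t³ |det(X, Ẋ)| ≤ t³ ‖X‖ ‖Ẋ‖ = O(t² ‖X‖)`, so
`‖X‖ ≥ k / t²`. Near the origin `f_{ε,a}(x) = F ‖x‖` with `F` convex and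
`F(k / t²) ≳ 1 / (t² log t)`.
-/

open Filter Set
open scoped Topology Gradient RealInnerProductSpace

section NesterovEnergy

variable {E : Type*} [NormedAddCommGroup E] [NormedSpace ℝ E]
  {f : E → ℝ} {X X' : ℝ → E} {x₀ : E} {t M : ℝ}

/-- The Su–Boyd–Candès Lyapunov function of a trajectory `X` with velocity `X'`, relative to the
candidate minimizer `x₀` of `f`. -/
noncomputable def nesterovEnergy (f : E → ℝ) (x₀ : E) (X X' : ℝ → E) (t : ℝ) : ℝ :=
  t ^ 2 * (f (X t) - f x₀) + 2 * ‖X t - x₀ + (t / 2) • X' t‖ ^ 2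

theorem sub_le_div_sq_of_nesterovEnergy_le (ht : t ≠ 0) (hM : nesterovEnergy f x₀ X X' t ≤ M) :
    f (X t) - f x₀ ≤ M / t ^ 2 := by
  rw [le_div_iff₀' (by positivity)]
  exact (le_add_of_nonneg_right (by positivity)).trans hM

theorem mul_norm_velocity_le_of_nesterovEnergy_le (hf : f x₀ ≤ f (X t))
    (hM : nesterovEnergy f x₀ X X' t ≤ M) :
    t * ‖X' t‖ ≤ 2 * (√(M / 2) + ‖X t - x₀‖) := by
  have hV : ‖X t - x₀ + (t / 2) • X' t‖ ≤ √(M / 2) := by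
    apply Real.le_sqrt_of_sq_le
    have := mul_nonneg (sq_nonneg t) (sub_nonneg.2 hf)
    rw [nesterovEnergy] at hM
    linarith
  have htri : t / 2 * ‖X' t‖ ≤ ‖X t - x₀ + (t / 2) • X' t‖ + ‖X t - x₀‖ := calc
    t / 2 * ‖X' t‖ ≤ ‖(t / 2) • X' t‖ := by
      rw [norm_smul]
      gcongr
      exact Real.le_norm_self _
    _ = ‖X t - x₀ + (t / 2) • X' t - (X t - x₀)‖ := by rw [add_sub_cancel_left]
    _ ≤ _ := norm_sub_le _ _
  linarith

theorem exists_eventually_mul_norm_velocity_le (hf : ∀ᶠ t in atTop, f x₀ ≤ f (X t))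
    (hlim : Tendsto X atTop (𝓝 x₀)) (hM : ∀ᶠ t in atTop, nesterovEnergy f x₀ X X' t ≤ M) :
    ∃ B, ∀ᶠ t in atTop, t * ‖X' t‖ ≤ B := by
  refine ⟨2 * (√(M / 2) + 1), ?_⟩
  filter_upwards [hf, hM,
    (tendsto_iff_norm_sub_tendsto_zero.1 hlim).eventually_le_const zero_lt_one] with t hf hM hX
  exact (mul_norm_velocity_le_of_nesterovEnergy_le hf hM).trans (by gcongr)

end NesterovEnergy

section NesterovFlow

variable {E : Type*} [NormedAddCommGroup E] [InnerProductSpace ℝ E] [CompleteSpace E]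
  {f : E → ℝ} {X X' X'' : ℝ → E} {x₀ : E} {t : ℝ}

/-- The Nesterov ODE `Ẍ + (3/t) Ẋ + ∇f(X) = 0` holds at time `t` for the trajectory `X`, with
velocity `X'` and acceleration `X''`. -/
structure IsNesterovFlowAt (f : E → ℝ) (X X' X'' : ℝ → E) (t : ℝ) : Prop where
  hasDerivAt : HasDerivAt X (X' t) t
  hasDerivAt_velocity : HasDerivAt X' (X'' t) t
  ode : X'' t + (3 / t) • X' t + ∇ f (X t) = 0

theorem IsNesterovFlowAt.hasDerivAt_nesterovEnergy (h : IsNesterovFlowAt f X X' X'' t)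
    (ht : t ≠ 0) (hf : DifferentiableAt ℝ f (X t)) (x₀ : E) :
    HasDerivAt (nesterovEnergy f x₀ X X')
      (2 * t * (f (X t) - f x₀ - ⟪∇ f (X t), X t - x₀⟫)) t := by
  have hfX : HasDerivAt (fun s ↦ f (X s) - f x₀) ⟪∇ f (X t), X' t⟫ t :=
    (hf.hasGradientAt.hasFDerivAt.comp_hasDerivAt t h.hasDerivAt).sub_const _
  have hV : HasDerivAt (fun s ↦ X s - x₀ + (s / 2) • X' s) (-(t / 2) • ∇ f (X t)) t := by
    have hX'' : X'' t = -(3 / t) • X' t - ∇ f (X t) := by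
      rw [← sub_eq_zero, ← h.ode]
      module
    refine ((h.hasDerivAt.sub_const x₀).add
      (((hasDerivAt_id' t).div_const 2).smul h.hasDerivAt_velocity)).congr_deriv ?_
    rw [hX'']
    match_scalars <;> field_simp
    ring
  refine (((hasDerivAt_pow 2 t).mul hfX).add (hV.norm_sq.const_mul 2)).congr_deriv ?_
  simp only [inner_smul_right, real_inner_comm (∇ f (X t)), inner_add_right]
  ring

theorem antitoneOn_nesterovEnergy {T : ℝ} (hT : 0 < T)
    (hX : ∀ t ≥ T, IsNesterovFlowAt f X X' X'' t) (hf : ∀ t ≥ T, DifferentiableAt ℝ f (X t))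
    (hstar : ∀ t ≥ T, f (X t) - f x₀ ≤ ⟪∇ f (X t), X t - x₀⟫) :
    AntitoneOn (nesterovEnergy f x₀ X X') (Ici T) := by
  have hderiv := fun t (ht : t ≥ T) ↦
    (hX t ht).hasDerivAt_nesterovEnergy (hT.trans_le ht).ne' (hf t ht) x₀
  refine antitoneOn_of_hasDerivWithinAt_nonpos (convex_Ici T)
    (fun t ht ↦ (hderiv t ht).continuousAt.continuousWithinAt)
    (fun t ht ↦ (hderiv t (interior_subset ht)).hasDerivWithinAt) fun t ht ↦ ?_
  have hTt : T ≤ t := interior_subset ht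
  exact mul_nonpos_of_nonneg_of_nonpos (by linarith) (sub_nonpos.2 (hstar t hTt))

theorem exists_eventually_nesterovEnergy_le
    (hX : ∀ᶠ t in atTop, IsNesterovFlowAt f X X' X'' t)
    (hf : ∀ᶠ t in atTop, DifferentiableAt ℝ f (X t))
    (hstar : ∀ᶠ t in atTop, f (X t) - f x₀ ≤ ⟪∇ f (X t), X t - x₀⟫) :
    ∃ M, ∀ᶠ t in atTop, nesterovEnergy f x₀ X X' t ≤ M := by
  obtain ⟨T, hT⟩ :=
    (hX.and (hf.and (hstar.and (eventually_gt_atTop 0)))).exists_forall_of_atTop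
  have hanti := antitoneOn_nesterovEnergy (hT T le_rfl).2.2.2 (fun t ht ↦ (hT t ht).1)
    (fun t ht ↦ (hT t ht).2.1) (fun t ht ↦ (hT t ht).2.2.1)
  exact ⟨_, (eventually_ge_atTop T).mono fun t ht ↦ hanti self_mem_Ici ht ht⟩

end NesterovFlow

section AngularMomentum

theorem abs_det_le_norm_mul_norm (x y : EuclideanSpace ℝ (Fin 2)) :
    |x 0 * y 1 - x 1 * y 0| ≤ ‖x‖ * ‖y‖ := by
  refine abs_le_of_sq_le_sq ?_ (by positivity)
  rw [mul_pow, EuclideanSpace.real_norm_sq_eq, EuclideanSpace.real_norm_sq_eq,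
    Fin.sum_univ_two, Fin.sum_univ_two]
  linarith [sq_nonneg (x 0 * y 0 + x 1 * y 1)]

theorem exists_pos_eventually_div_sq_le_norm {X X' : ℝ → EuclideanSpace ℝ (Fin 2)} {κ B : ℝ}
    (hκ : κ ≠ 0) (hmom : ∀ᶠ t in atTop, t ^ 3 * (X t 0 * X' t 1 - X t 1 * X' t 0) = κ)
    (hB : ∀ᶠ t in atTop, t * ‖X' t‖ ≤ B) :
    ∃ k > 0, ∀ᶠ t in atTop, k / t ^ 2 ≤ ‖X t‖ := by
  refine ⟨|κ| / max B 1, by positivity, ?_⟩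
  filter_upwards [hmom, hB, eventually_gt_atTop 0] with t hmom hB ht
  rw [div_le_iff₀ (by positivity), div_le_iff₀ (by positivity)]
  calc |κ| = t ^ 3 * |X t 0 * X' t 1 - X t 1 * X' t 0| := by
        rw [← hmom, abs_mul, abs_of_pos (by positivity)]
    _ ≤ t ^ 3 * (‖X t‖ * ‖X' t‖) := by
        gcongr
        exact abs_det_le_norm_mul_norm _ _
    _ = ‖X t‖ * t ^ 2 * (t * ‖X' t‖) := by ring
    _ ≤ ‖X t‖ * t ^ 2 * max B 1 := by
        gcongr
        exact hB.trans (le_max_left _ _)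

end AngularMomentum

section RadialProfile

variable {r s : ℝ}

theorem mul_sub_le_integral_of_monotoneOn {g : ℝ → ℝ} (hsr : s ≤ r) (hg : MonotoneOn g (Icc s r)) :
    g s * (r - s) ≤ ∫ u in s..r, g u := by
  have hint : IntervalIntegrable g MeasureTheory.volume s r :=
    MonotoneOn.intervalIntegrable (by rwa [uIcc_of_le hsr])
  have h := intervalIntegral.integral_mono_on hsr (intervalIntegrable_const (c := g s)) hint
    fun u hu ↦ hg (left_mem_Icc.2 hsr) hu hu.1
  simpa [mul_comm] using h

theorem integral_le_mul_sub_of_monotoneOn {g : ℝ → ℝ} (hsr : s ≤ r) (hg : MonotoneOn g (Icc s r)) :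
    ∫ u in s..r, g u ≤ g r * (r - s) := by
  have hint : IntervalIntegrable g MeasureTheory.volume s r :=
    MonotoneOn.intervalIntegrable (by rwa [uIcc_of_le hsr])
  have h := intervalIntegral.integral_mono_on hsr hint (intervalIntegrable_const (c := g r))
    fun u hu ↦ hg hu (right_mem_Icc.2 hsr) hu.2
  simpa [mul_comm] using h

theorem one_div_neg_log_nonneg (hr₀ : 0 ≤ r) (hr : r ≤ 1) : 0 ≤ 1 / (-Real.log r) :=
  one_div_nonneg.2 (neg_nonneg.2 (Real.log_nonpos hr₀ hr))

theorem monotoneOn_one_div_neg_log (hs : 0 ≤ s) (hr : r < 1) :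
    MonotoneOn (fun u ↦ 1 / (-Real.log u)) (Icc s r) := by
  intro u hu v hv huv
  have hv₁ : v < 1 := hv.2.trans_lt hr
  rcases (hs.trans hu.1).eq_or_lt with rfl | hu₀
  · simpa using one_div_neg_log_nonneg huv hv₁.le
  · exact one_div_le_one_div_of_le (neg_pos.2 (Real.log_neg (hu₀.trans_le huv) hv₁))
      (neg_le_neg (Real.log_le_log hu₀ huv))

theorem intervalIntegrable_one_div_neg_log (hs : 0 ≤ s) (hsr : s ≤ r) (hr : r < 1) :
    IntervalIntegrable (fun u ↦ 1 / (-Real.log u)) MeasureTheory.volume s r := by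
  apply MonotoneOn.intervalIntegrable
  rw [uIcc_of_le hsr]
  exact monotoneOn_one_div_neg_log hs hr

theorem exp_neg_two_lt_one : Real.exp (-2) < 1 :=
  Real.exp_lt_one_iff.2 (by norm_num)

theorem F_eq_integral (hr : r ≤ Real.exp (-2)) : F r = ∫ u in (0 : ℝ)..r, 1 / (-Real.log u) :=
  if_pos hr

theorem F_zero : F 0 = 0 := by
  rw [F_eq_integral (Real.exp_nonneg _), intervalIntegral.integral_same]

theorem F_sub_F_eq_integral (hs : 0 ≤ s) (hsr : s ≤ r) (hr : r ≤ Real.exp (-2)) :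
    F r - F s = ∫ u in s..r, 1 / (-Real.log u) := by
  have hr₁ : r < 1 := hr.trans_lt exp_neg_two_lt_one
  rw [F_eq_integral hr, F_eq_integral (hsr.trans hr)]
  exact intervalIntegral.integral_interval_sub_left
    (intervalIntegrable_one_div_neg_log le_rfl (hs.trans hsr) hr₁)
    (intervalIntegrable_one_div_neg_log le_rfl hs (hsr.trans_lt hr₁))

theorem mul_sub_le_F_sub_F (hs : 0 ≤ s) (hsr : s ≤ r) (hr : r ≤ Real.exp (-2)) :
    1 / (-Real.log s) * (r - s) ≤ F r - F s := by
  rw [F_sub_F_eq_integral hs hsr hr]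
  exact mul_sub_le_integral_of_monotoneOn hsr
    (monotoneOn_one_div_neg_log hs (hr.trans_lt exp_neg_two_lt_one))

theorem F_sub_F_le_mul_sub (hs : 0 ≤ s) (hsr : s ≤ r) (hr : r ≤ Real.exp (-2)) :
    F r - F s ≤ 1 / (-Real.log r) * (r - s) := by
  rw [F_sub_F_eq_integral hs hsr hr]
  exact integral_le_mul_sub_of_monotoneOn hsr
    (monotoneOn_one_div_neg_log hs (hr.trans_lt exp_neg_two_lt_one))

theorem monotoneOn_F : MonotoneOn F (Icc 0 (Real.exp (-2))) := fun s hs r hr hsr ↦ by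
  have hslope := one_div_neg_log_nonneg hs.1 (hs.2.trans exp_neg_two_lt_one.le)
  exact sub_nonneg.1
    ((mul_nonneg hslope (sub_nonneg.2 hsr)).trans (mul_sub_le_F_sub_F hs.1 hsr hr.2))

theorem F_nonneg (hr₀ : 0 ≤ r) (hr : r ≤ Real.exp (-2)) : 0 ≤ F r :=
  F_zero.symm.trans_le (monotoneOn_F ⟨le_rfl, Real.exp_nonneg _⟩ ⟨hr₀, hr⟩ hr₀)

theorem hasDerivAt_F (hr₀ : 0 < r) (hr : r < Real.exp (-2)) :
    HasDerivAt F (1 / (-Real.log r)) r := by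
  have hr₁ : r < 1 := hr.trans exp_neg_two_lt_one
  have hcont : ContinuousAt (fun u ↦ 1 / (-Real.log u)) r :=
    continuousAt_const.div (Real.continuousAt_log hr₀.ne').neg
      (neg_ne_zero.2 (Real.log_neg hr₀ hr₁).ne)
  have hmeas : Measurable fun u ↦ 1 / (-Real.log u) := by fun_prop
  exact (intervalIntegral.integral_hasDerivAt_right
    (intervalIntegrable_one_div_neg_log le_rfl hr₀.le hr₁)
    hmeas.stronglyMeasurable.stronglyMeasurableAtFilter hcont).congr_of_eventuallyEq
    ((eventually_le_nhds hr).mono fun _ ↦ F_eq_integral)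

theorem half_div_neg_log_half_le_F (hr₀ : 0 ≤ r) (hr : r ≤ Real.exp (-2)) :
    r / 2 / (-Real.log (r / 2)) ≤ F r := by
  have hhalf : r / 2 ≤ r := half_le_self hr₀
  calc r / 2 / (-Real.log (r / 2)) = 1 / (-Real.log (r / 2)) * (r - r / 2) := by ring
    _ ≤ F r - F (r / 2) := mul_sub_le_F_sub_F (by positivity) hhalf hr
    _ ≤ F r := sub_le_self _ (F_nonneg (by positivity) (hhalf.trans hr))

theorem eventually_div_sq_mul_log_le_F_div_sq {k : ℝ} (hk : 0 < k) :
    ∀ᶠ t in atTop, k / 6 / (t ^ 2 * Real.log t) ≤ F (k / t ^ 2) := by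
  have hsmall : ∀ᶠ t : ℝ in atTop, k / t ^ 2 < Real.exp (-2) :=
    ((tendsto_pow_atTop two_ne_zero).const_div_atTop k).eventually_lt_const (Real.exp_pos _)
  filter_upwards [hsmall, eventually_gt_atTop 1,
    Real.tendsto_log_atTop.eventually_ge_atTop (-Real.log (k / 2))] with t hsmall ht hkt
  have hlog : -Real.log (k / t ^ 2 / 2) ≤ 3 * Real.log t := by
    rw [div_right_comm, Real.log_div (by positivity) (by positivity), Real.log_pow]
    push_cast
    linarith
  have hlog_pos : 0 < -Real.log (k / t ^ 2 / 2) := by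
    have : k / t ^ 2 < 1 := hsmall.trans exp_neg_two_lt_one
    exact neg_pos.2 (Real.log_neg (by positivity) (by linarith))
  calc k / 6 / (t ^ 2 * Real.log t) = k / t ^ 2 / 2 / (3 * Real.log t) := by
        field_simp
        norm_num
    _ ≤ k / t ^ 2 / 2 / (-Real.log (k / t ^ 2 / 2)) := by gcongr
    _ ≤ F (k / t ^ 2) := half_div_neg_log_half_le_F (by positivity) hsmall.le

end RadialProfile

section Objective

variable {ε a : ℝ}

theorem feps_eventuallyEq_F_norm (ha : 0 < a) : feps ε a =ᶠ[𝓝 0] fun x ↦ F ‖x‖ := by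
  have hcont : ContinuousAt (fun x : EuclideanSpace ℝ (Fin 2) ↦ x 0) 0 := by fun_prop
  filter_upwards [hcont.eventually_lt_const ha] with x hx
  have hnorm : √(x 0 ^ 2 + x 1 ^ 2) = ‖x‖ := by simp [EuclideanSpace.norm_eq]
  simp [feps, hnorm, hx.le]

theorem feps_zero (ha : 0 < a) : feps ε a 0 = 0 := by
  rw [(feps_eventuallyEq_F_norm ha).eq_of_nhds, norm_zero, F_zero]

theorem eventually_norm_lt_exp_neg_two {E : Type*} [SeminormedAddCommGroup E] :
    ∀ᶠ x : E in 𝓝 0, ‖x‖ < Real.exp (-2) :=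
  tendsto_norm_zero.eventually_lt_const (Real.exp_pos _)

theorem eventually_feps_nonneg (ha : 0 < a) : ∀ᶠ x in 𝓝 0, 0 ≤ feps ε a x := by
  filter_upwards [feps_eventuallyEq_F_norm ha, eventually_norm_lt_exp_neg_two] with x hfx hx
  rw [hfx]
  exact F_nonneg (norm_nonneg x) hx.le

theorem eventually_differentiableAt_feps (ha : 0 < a) :
    ∀ᶠ x in 𝓝[≠] 0, DifferentiableAt ℝ (feps ε a) x := by
  filter_upwards [(feps_eventuallyEq_F_norm ha).eventuallyEq_nhds.filter_mono nhdsWithin_le_nhds,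
    eventually_norm_lt_exp_neg_two.filter_mono nhdsWithin_le_nhds, self_mem_nhdsWithin]
    with x hfx hx hx₀
  exact ((hasDerivAt_F (norm_pos_iff.2 hx₀) hx).differentiableAt.comp x
    (differentiableAt_id.norm ℝ hx₀)).congr_of_eventuallyEq hfx

theorem inner_gradient_comp_norm {E : Type*} [NormedAddCommGroup E] [InnerProductSpace ℝ E]
    [CompleteSpace E] {φ : ℝ → ℝ} {φ' : ℝ} {x : E} (hx : x ≠ 0) (hφ : HasDerivAt φ φ' ‖x‖) :
    ⟪∇ (fun y ↦ φ ‖y‖) x, x⟫ = φ' * ‖x‖ := by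
  have hnorm : DifferentiableAt ℝ (‖·‖) x := differentiableAt_id.norm ℝ hx
  have hcomp : HasFDerivAt (fun y ↦ φ ‖y‖) (φ' • fderiv ℝ (‖·‖) x) x :=
    hφ.comp_hasFDerivAt x hnorm.hasFDerivAt
  rw [inner_gradient_left, hcomp.fderiv, smul_apply, hnorm.fderiv_norm_self,
    smul_eq_mul]

theorem eventually_feps_le_inner_gradient (ha : 0 < a) :
    ∀ᶠ x in 𝓝[≠] 0, feps ε a x ≤ ⟪∇ (feps ε a) x, x⟫ := by
  filter_upwards [(feps_eventuallyEq_F_norm ha).eventuallyEq_nhds.filter_mono nhdsWithin_le_nhds,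
    eventually_norm_lt_exp_neg_two.filter_mono nhdsWithin_le_nhds, self_mem_nhdsWithin]
    with x hfx hx hx₀
  rw [hfx.gradient_eq, inner_gradient_comp_norm hx₀ (hasDerivAt_F (norm_pos_iff.2 hx₀) hx),
    hfx.eq_of_nhds]
  simpa [F_zero] using F_sub_F_le_mul_sub le_rfl (norm_nonneg x) hx.le

theorem eventually_div_sq_mul_log_le_feps {X : ℝ → EuclideanSpace ℝ (Fin 2)} {k : ℝ} (ha : 0 < a)
    (hlim : Tendsto X atTop (𝓝 0)) (hk : 0 < k) (hXk : ∀ᶠ t in atTop, k / t ^ 2 ≤ ‖X t‖) :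
    ∀ᶠ t in atTop, k / 6 / (t ^ 2 * Real.log t) ≤ feps ε a (X t) := by
  filter_upwards [hlim.eventually (feps_eventuallyEq_F_norm ha),
    hlim.eventually eventually_norm_lt_exp_neg_two, hXk,
    eventually_div_sq_mul_log_le_F_div_sq hk] with t hfX hX hXk hF
  rw [hfX]
  exact hF.trans (monotoneOn_F ⟨by positivity, hXk.trans hX.le⟩ ⟨norm_nonneg _, hX.le⟩ hXk)

end Objective

theorem nesterov_function_value_matching_bounds_general {a ε : ℝ} (ha : 0 < a)
    {X X' X'' : ℝ → EuclideanSpace ℝ (Fin 2)} {κ : ℝ} (hκ : κ ≠ 0)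
    (hflow : ∀ᶠ t in atTop, IsNesterovFlowAt (feps ε a) X X' X'' t)
    (hlim : Tendsto X atTop (𝓝 0))
    (hmom : ∀ᶠ t in atTop, t ^ 3 * (X t 0 * X' t 1 - X t 1 * X' t 0) = κ) :
    ∃ c₀ > (0 : ℝ), ∃ C₀ > (0 : ℝ), ∃ T₀ > (0 : ℝ), ∀ t ≥ T₀,
      c₀ / (t ^ 2 * Real.log t) ≤ feps ε a (X t) ∧ feps ε a (X t) ≤ C₀ / t ^ 2 := by
  have hlim_ne : Tendsto X atTop (𝓝[≠] 0) :=
    tendsto_nhdsWithin_iff.2 ⟨hlim, hmom.mono fun t ht h ↦ hκ (by simp_all)⟩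
  obtain ⟨M, hM⟩ := exists_eventually_nesterovEnergy_le (x₀ := 0) hflow
    (hlim_ne.eventually (eventually_differentiableAt_feps ha))
    (by simpa [feps_zero ha] using hlim_ne.eventually (eventually_feps_le_inner_gradient ha))
  obtain ⟨B, hB⟩ := exists_eventually_mul_norm_velocity_le
    (by simpa [feps_zero ha] using hlim.eventually (eventually_feps_nonneg ha)) hlim hM
  obtain ⟨k, hk, hXk⟩ := exists_pos_eventually_div_sq_le_norm hκ hmom hB
  have hlower := eventually_div_sq_mul_log_le_feps (ε := ε) ha hlim hk hXk
  have hupper : ∀ᶠ t in atTop, feps ε a (X t) ≤ max M 1 / t ^ 2 := by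
    filter_upwards [hM, eventually_ne_atTop 0] with t hM ht
    simpa [feps_zero ha] using sub_le_div_sq_of_nesterovEnergy_le ht (hM.trans (le_max_left M 1))
  obtain ⟨T₀, hT₀⟩ :=
    ((hlower.and hupper).and (eventually_gt_atTop 0)).exists_forall_of_atTop
  exact ⟨k / 6, by positivity, max M 1, by positivity, T₀, (hT₀ T₀ le_rfl).2,
    fun t ht ↦ (hT₀ t ht).1⟩

/-- along the solution of the Nesterov flow for `f_{ε,a}` started at
`(2a, a)`, converging to `0` and carrying conserved angular momentum
`t³·det(X(t), Ẋ(t)) = κ > 0` for `t ≥ T_rad`, there are `c₀, C₀, T₀ > 0` with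
`c₀/(t²·log t) ≤ f_{ε,a}(X(t)) ≤ C₀/t²` for all `t ≥ T₀`. -/
theorem nesterov_function_value_matching_bounds (a ε : ℝ) (ha : 0 < a) (hε : 0 < ε)
    (X X' X'' : ℝ → EuclideanSpace ℝ (Fin 2))
    (hXcont : ContinuousOn X (Set.Ici 0))
    (hX' : ∀ t > (0:ℝ), HasDerivAt X (X' t) t)
    (hX'' : ∀ t > (0:ℝ), HasDerivAt X' (X'' t) t)
    (hX''cont : ContinuousOn X'' (Set.Ioi 0))
    (hX0₁ : X 0 0 = 2 * a) (hX0₂ : X 0 1 = a)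
    (hX'0 : Filter.Tendsto X' (nhdsWithin 0 (Set.Ioi 0)) (nhds 0))
    (hODE : ∀ t > (0:ℝ), X'' t + (3 / t) • X' t + gradient (feps ε a) (X t) = 0)
    (hlim : Filter.Tendsto X Filter.atTop (nhds 0))
    (Trad κ : ℝ) (hTrad : 0 < Trad) (hκ : 0 < κ)
    (hmom : ∀ t ≥ Trad, t ^ 3 * (X t 0 * X' t 1 - X t 1 * X' t 0) = κ) :
    ∃ c₀ > (0:ℝ), ∃ C₀ > (0:ℝ), ∃ T₀ > (0:ℝ), ∀ t ≥ T₀,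
      c₀ / (t ^ 2 * Real.log t) ≤ feps ε a (X t) ∧ feps ε a (X t) ≤ C₀ / t ^ 2 :=
  nesterov_function_value_matching_bounds_general ha hκ.ne'
    ((eventually_gt_atTop 0).mono fun t ht ↦ ⟨hX' t ht, hX'' t ht, hODE t ht⟩) hlim
    ((eventually_ge_atTop Trad).mono hmom)
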